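/- arXiv:1911.01302 — 3 statements merged into one kernel-verified Lean document; each statement's English description precedes it below -/
import Mathlib

section
/- Let [a,b] ⊂ ℝ with a < b and let f be an infinitely differentiable function on [a,b]. Set M_n(f) = sup_{x∈[a,b]} |f^(n)(x)|. Suppose liminf_{n→∞} (M_n(f))^{1/n}/n < ∞. If c ∈ [a,b] is such that f^(n)(c) = 0 for all n ∈ ℕ, then f is identically zero on [a,b]. -/
open Set

/-!
If `f` is flat at `y` and `‖D^n f‖ ≤ (C n)^n` on a convex set, Taylor's formula of order `n` at `y`
gives `‖f x‖ ≤ n (C n ‖x - y‖)^n / n! ≤ n (C e ‖x - y‖)^n`. When this holds for infinitely many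
`n`, letting `n → ∞` shows that `f` vanishes wherever `C e ‖x - y‖ < 1`. The radius `1 / (C e)` does
not depend on `y`, so flatness propagates from one point to the whole convex set.
-/

open Filter
open scoped ContDiff Nat Topology

theorem pow_self_le_exp_one_pow_mul_factorial (n : ℕ) : (n : ℝ) ^ n ≤ Real.exp 1 ^ n * n ! := by
  rw [Real.exp_one_pow, ← div_le_iff₀ (by positivity)]
  exact Real.pow_div_factorial_le_exp n n.cast_nonneg n

theorem frequently_le_mul_pow_of_liminf_lt_top {u : ℕ → ℝ} (hu : ∀ n, 0 ≤ u n)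
    (h : liminf (fun n : ℕ ↦ ENNReal.ofReal (u n ^ (1 / (n : ℝ)) / n)) atTop < ⊤) :
    ∃ C : ℝ, 0 ≤ C ∧ ∃ᶠ n : ℕ in atTop, u n ≤ (C * n) ^ n := by
  obtain ⟨C, hC, -⟩ := ENNReal.lt_iff_exists_nnreal_btwn.1 h
  refine ⟨C, C.coe_nonneg, ?_⟩
  refine ((frequently_lt_of_liminf_lt (by isBoundedDefault) hC).and_eventually
    (eventually_ne_atTop 0)).mono fun n ⟨hlt, hn⟩ ↦ ?_
  have hroot : u n ^ (1 / (n : ℝ)) ≤ C * n :=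
    (div_le_iff₀ (by positivity)).1 (ENNReal.ofReal_le_coe.1 hlt.le)
  calc
    u n = (u n ^ (1 / (n : ℝ))) ^ n := by rw [one_div, Real.rpow_inv_natCast_pow (hu n) hn]
    _ ≤ (C * n) ^ n := pow_le_pow_left₀ (Real.rpow_nonneg (hu n) _) hroot n

section LineRestriction

variable {𝕜 E F : Type*} [NontriviallyNormedField 𝕜] [NormedAddCommGroup E] [NormedSpace 𝕜 E]
  [NormedAddCommGroup F] [NormedSpace 𝕜 F] {f : E → F} {s : Set E} {t : Set 𝕜} {x v : E} {n : ℕ}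

theorem iteratedDerivWithin_comp_add_smul (hf : ContDiffOn 𝕜 n f s) (hs : UniqueDiffOn 𝕜 s)
    (ht : UniqueDiffOn 𝕜 t) (hmaps : MapsTo (fun r : 𝕜 ↦ x + r • v) t s) :
    EqOn (iteratedDerivWithin n (fun r : 𝕜 ↦ f (x + r • v)) t)
      (fun r ↦ iteratedFDerivWithin 𝕜 n f s (x + r • v) fun _ ↦ v) t := by
  induction n with
  | zero => intro r _; simp
  | succ n ih =>
    intro r hr
    have hline : HasDerivWithinAt (fun r : 𝕜 ↦ x + r • v) v t r := by
      simpa using (((hasDerivAt_id r).smul_const v).const_add x).hasDerivWithinAt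
    have hD : HasFDerivWithinAt (iteratedFDerivWithin 𝕜 n f s)
        (iteratedFDerivWithin 𝕜 (n + 1) f s (x + r • v)).curryLeft s (x + r • v) :=
      (hf.ftaylorSeriesWithin hs).fderivWithin n (mod_cast n.lt_succ_self) _ (hmaps hr)
    have hcons : (Fin.cons v fun _ : Fin n ↦ v) = fun _ ↦ v := Matrix.vecCons_const v
    have hderiv : HasDerivWithinAt (fun r : 𝕜 ↦ iteratedFDerivWithin 𝕜 n f s (x + r • v) fun _ ↦ v)
        (iteratedFDerivWithin 𝕜 (n + 1) f s (x + r • v) fun _ ↦ v) t r := by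
      simpa [hcons, Function.comp_def] using
        (hD.continuousMultilinear_apply_const fun _ ↦ v).comp_hasDerivWithinAt r hline hmaps
    have ih' := ih (hf.of_le (mod_cast n.le_succ))
    rw [iteratedDerivWithin_succ, derivWithin_congr ih' (ih' hr)]
    exact hderiv.derivWithin (ht r hr)

end LineRestriction

section Flat

variable {E F : Type*} [NormedAddCommGroup E] [NormedSpace ℝ E] [NormedAddCommGroup F]
  [NormedSpace ℝ F] {f : E → F} {s : Set E} {x y : E} {C : ℝ} {n : ℕ}

/-- `f` is flat at `x` within `s`: all its iterated derivatives within `s`, the zeroth one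
`f x` included, vanish at `x`. -/
def IsFlatWithinAt (f : E → F) (s : Set E) (x : E) : Prop :=
  ∀ n : ℕ, iteratedFDerivWithin ℝ n f s x = 0

theorem IsFlatWithinAt.of_eventuallyEq_zero (h : f =ᶠ[𝓝[s] x] 0) (hx : x ∈ s) :
    IsFlatWithinAt f s x := fun n ↦ by
  rw [h.iteratedFDerivWithin_eq (h.self_of_nhdsWithin hx), Pi.zero_def,
    iteratedFDerivWithin_fun_zero, Pi.zero_apply]

theorem norm_le_of_iteratedFDerivWithin_eq_zero {M : ℝ} (hs : Convex ℝ s)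
    (hs' : UniqueDiffOn ℝ s) (hf : ContDiffOn ℝ (n + 1) f s) (hy : y ∈ s) (hx : x ∈ s)
    (hzero : ∀ k ≤ n, iteratedFDerivWithin ℝ k f s y = 0)
    (hM : ∀ z ∈ s, ‖iteratedFDerivWithin ℝ (n + 1) f s z‖ ≤ M) :
    ‖f x‖ ≤ M * ‖x - y‖ ^ (n + 1) / n ! := by
  set g : ℝ → F := fun r ↦ f (y + r • (x - y))
  have hmaps : MapsTo (fun r : ℝ ↦ y + r • (x - y)) (Icc 0 1) s :=
    fun r hr ↦ hs.add_smul_sub_mem hy hx hr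
  have hg : ContDiffOn ℝ (n + 1) g (Icc 0 1) := hf.comp (by fun_prop) hmaps
  have hg_deriv : ∀ k ≤ n + 1, ∀ r ∈ Icc (0 : ℝ) 1, iteratedDerivWithin k g (Icc 0 1) r =
      iteratedFDerivWithin ℝ k f s (y + r • (x - y)) fun _ ↦ x - y := fun k hk ↦
    iteratedDerivWithin_comp_add_smul (hf.of_le (mod_cast hk)) hs' uniqueDiffOn_Icc_zero_one hmaps
  have htaylor : taylorWithinEval g n (Icc 0 1) 0 1 = 0 := by
    rw [taylor_within_apply]
    refine Finset.sum_eq_zero fun k hk ↦ ?_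
    have hkn : k ≤ n := Finset.mem_range_succ_iff.1 hk
    rw [hg_deriv k (by lia) 0 (left_mem_Icc.2 zero_le_one), zero_smul, add_zero, hzero k hkn,
      zero_apply, smul_zero]
  have hbound : ∀ r ∈ Icc (0 : ℝ) 1,
      ‖iteratedDerivWithin (n + 1) g (Icc 0 1) r‖ ≤ M * ‖x - y‖ ^ (n + 1) := fun r hr ↦ by
    rw [hg_deriv _ le_rfl r hr]
    simpa using ContinuousMultilinearMap.le_of_opNorm_le (hM _ (hmaps hr)) fun _ ↦ x - y
  simpa [htaylor, g] using
    taylor_mean_remainder_bound zero_le_one hg (right_mem_Icc.2 zero_le_one) hbound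

namespace IsFlatWithinAt

theorem norm_le_mul_pow (hy : IsFlatWithinAt f s y) (hys : y ∈ s) (hs : Convex ℝ s)
    (hs' : UniqueDiffOn ℝ s) (hf : ContDiffOn ℝ n f s) (hn : n ≠ 0) (hC : 0 ≤ C)
    (hM : ∀ z ∈ s, ‖iteratedFDerivWithin ℝ n f s z‖ ≤ (C * n) ^ n) (hx : x ∈ s) :
    ‖f x‖ ≤ n * (C * Real.exp 1 * ‖x - y‖) ^ n := by
  obtain ⟨m, rfl⟩ := Nat.exists_eq_succ_of_ne_zero hn
  calc
    ‖f x‖ ≤ (C * (m + 1 : ℕ)) ^ (m + 1) * ‖x - y‖ ^ (m + 1) / m ! :=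
      norm_le_of_iteratedFDerivWithin_eq_zero hs hs' hf hys hx (fun k _ ↦ hy k) hM
    _ = ((m + 1 : ℕ) : ℝ) ^ (m + 1) * (C * ‖x - y‖) ^ (m + 1) / m ! := by ring
    _ ≤ Real.exp 1 ^ (m + 1) * (m + 1)! * (C * ‖x - y‖) ^ (m + 1) / m ! := by
      gcongr
      exact pow_self_le_exp_one_pow_mul_factorial (m + 1)
    _ = (m + 1 : ℕ) * (C * Real.exp 1 * ‖x - y‖) ^ (m + 1) := by
      rw [Nat.factorial_succ]
      push_cast
      field_simp
      ring

theorem eq_zero_of_norm_sub_lt (hy : IsFlatWithinAt f s y) (hys : y ∈ s) (hs : Convex ℝ s)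
    (hs' : UniqueDiffOn ℝ s) (hf : ContDiffOn ℝ ∞ f s) (hC : 0 ≤ C)
    (hM : ∃ᶠ n : ℕ in atTop, ∀ z ∈ s, ‖iteratedFDerivWithin ℝ n f s z‖ ≤ (C * n) ^ n)
    (hx : x ∈ s) (hxy : C * Real.exp 1 * ‖x - y‖ < 1) : f x = 0 := by
  have hlim := tendsto_self_mul_const_pow_of_lt_one (by positivity) hxy
  refine norm_le_zero_iff.1 <| ge_of_tendsto_of_frequently hlim ?_
  refine (hM.and_eventually (eventually_ne_atTop 0)).mono fun n ⟨hMn, hn⟩ ↦ ?_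
  exact hy.norm_le_mul_pow hys hs hs' (hf.of_le (mod_cast le_top)) hn hC hMn hx

theorem of_norm_sub_lt (hy : IsFlatWithinAt f s y) (hys : y ∈ s) (hs : Convex ℝ s)
    (hs' : UniqueDiffOn ℝ s) (hf : ContDiffOn ℝ ∞ f s) (hC : 0 ≤ C)
    (hM : ∃ᶠ n : ℕ in atTop, ∀ z ∈ s, ‖iteratedFDerivWithin ℝ n f s z‖ ≤ (C * n) ^ n)
    (hx : x ∈ s) (hxy : C * Real.exp 1 * ‖x - y‖ < 1) : IsFlatWithinAt f s x := by
  refine of_eventuallyEq_zero ?_ hx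
  have hnear : ∀ᶠ z in 𝓝 x, C * Real.exp 1 * ‖z - y‖ < 1 :=
    Tendsto.eventually_lt_const hxy (Continuous.tendsto (by fun_prop) x)
  filter_upwards [self_mem_nhdsWithin, nhdsWithin_le_nhds hnear] with z hz hzy
  exact hy.eq_zero_of_norm_sub_lt hys hs hs' hf hC hM hz hzy

theorem of_convex (hy : IsFlatWithinAt f s y) (hys : y ∈ s) (hs : Convex ℝ s)
    (hs' : UniqueDiffOn ℝ s) (hf : ContDiffOn ℝ ∞ f s) (hC : 0 ≤ C)
    (hM : ∃ᶠ n : ℕ in atTop, ∀ z ∈ s, ‖iteratedFDerivWithin ℝ n f s z‖ ≤ (C * n) ^ n)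
    (hx : x ∈ s) : IsFlatWithinAt f s x := by
  refine hs.isPreconnected.induction₂' (fun p q ↦ IsFlatWithinAt f s p → IsFlatWithinAt f s q)
    (fun p hp ↦ ?_) (fun _ _ _ _ _ _ hpq hqr ↦ hqr ∘ hpq) hys hx hy
  have hnear : ∀ᶠ q in 𝓝 p, C * Real.exp 1 * ‖q - p‖ < 1 :=
    Tendsto.eventually_lt_const (by simp) (Continuous.tendsto (by fun_prop) p)
  filter_upwards [self_mem_nhdsWithin, nhdsWithin_le_nhds hnear] with q hq hqp
  exact ⟨fun h ↦ h.of_norm_sub_lt hp hs hs' hf hC hM hq hqp,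
    fun h ↦ h.of_norm_sub_lt hq hs hs' hf hC hM hp (by rwa [norm_sub_rev])⟩

end IsFlatWithinAt

theorem stmt_16_general (hs : Convex ℝ s) (hs' : UniqueDiffOn ℝ s) (hf : ContDiffOn ℝ ∞ f s)
    {M : ℕ → ℝ} (hM : ∀ n, ∀ x ∈ s, ‖iteratedFDerivWithin ℝ n f s x‖ ≤ M n)
    (hliminf : liminf (fun n : ℕ ↦ ENNReal.ofReal (M n ^ (1 / (n : ℝ)) / n)) atTop < ⊤)
    {c : E} (hc : c ∈ s) (hflat : IsFlatWithinAt f s c) : ∀ x ∈ s, f x = 0 := by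
  intro x hx
  have hM_nonneg : ∀ n, 0 ≤ M n := fun n ↦ (norm_nonneg _).trans (hM n c hc)
  obtain ⟨C, hC, hfreq⟩ := frequently_le_mul_pow_of_liminf_lt_top hM_nonneg hliminf
  have hbound : ∃ᶠ n : ℕ in atTop, ∀ z ∈ s, ‖iteratedFDerivWithin ℝ n f s z‖ ≤ (C * n) ^ n :=
    hfreq.mono fun n hn z hz ↦ (hM n z hz).trans hn
  have hx_flat : IsFlatWithinAt f s x := hflat.of_convex hc hs hs' hf hC hbound hx
  simpa using DFunLike.congr_fun (hx_flat 0) 0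

end Flat

theorem stmt_16 (a b : ℝ) (hab : a < b) (f : ℝ → ℝ)
    (hf : ContDiffOn ℝ (⊤ : ℕ∞) f (Icc a b))
    (Mf : ℕ → ℝ)
    (hMf : ∀ n : ℕ, Mf n = sSup ((fun x => |iteratedDerivWithin n f (Icc a b) x|) '' Icc a b))
    (hliminf : Filter.liminf
      (fun n : ℕ => ENNReal.ofReal ((Mf n) ^ (1 / (n : ℝ)) / n)) Filter.atTop < ⊤)
    (c : ℝ) (hc : c ∈ Icc a b)
    (hzero : ∀ n : ℕ, iteratedDerivWithin n f (Icc a b) c = 0) :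
    ∀ x ∈ Icc a b, f x = 0 := by
  have hs := uniqueDiffOn_Icc hab
  refine stmt_16_general (convex_Icc a b) hs hf (fun n x hx ↦ ?_) hliminf hc fun n ↦ ?_
  · rw [norm_iteratedFDerivWithin_eq_norm_iteratedDerivWithin, hMf]
    exact (hf.continuousOn_iteratedDerivWithin (mod_cast le_top) hs).norm.le_sSup_image_Icc hx
  · rw [← norm_eq_zero, norm_iteratedFDerivWithin_eq_norm_iteratedDerivWithin, hzero, norm_zero]
end

section
/- Let (x_n)_{n∈ℕ} be a strictly decreasing sequence of real numbers and define the polynomials Q recursively by Q(x) = 1 (empty list of nodes) and Q(x, x_0, x_1, …, x_{n-1}) = ∫_{x_0}^{x} Q(t, x_1, …, x_{n-1}) dt. Then for every n ≥ 1 and every real x with x ≥ x_0: (x − x_0)^n / n! ≤ Q(x, x_0, x_1, …, x_{n-1}) ≤ (x − x_n)^n / n!. -/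
open Set intervalIntegral

/-- The Gontcharoff polynomial `Q(x, x₀, …, x_{n-1})` associated to a list of nodes,
defined by `Q(x) = 1` and `Q(x, x₀, …, x_{n-1}) = ∫_{x₀}^{x} Q(t, x₁, …, x_{n-1}) dt`. -/
noncomputable def Qpoly : List ℝ → ℝ → ℝ
  | [], _ => 1
  | x₀ :: rest, y => ∫ t in x₀..y, Qpoly rest t

/-!
On nodes with `y ≥ x₀ ≥ x₁ ≥ ⋯`, the value `Q(y, x₀, …, x_{n-1})` is an iterated integral of
nonnegative functions over intervals that shrink when the nodes are raised, so it is antitone in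
the nodes. When all nodes equal `c` it is `(y - c)ⁿ / n!`; both bounds follow by comparing the
given nodes with the constant nodes `x₀` and `xₙ`.
-/

theorem continuous_Qpoly : ∀ l : List ℝ, Continuous (Qpoly l)
  | [] => continuous_const
  | a :: l => continuous_primitive (continuous_Qpoly l).intervalIntegrable a

theorem Qpoly_nonneg {l : List ℝ} {y : ℝ} (hl : (y :: l).IsChain (· ≥ ·)) : 0 ≤ Qpoly l y := by
  induction l generalizing y with
  | nil => exact zero_le_one
  | cons a l ih =>
    obtain ⟨hay, hl⟩ := List.isChain_cons_cons.mp hl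
    exact integral_nonneg hay fun t ht ↦ ih (hl.imp_head fun h ↦ h.trans ht.1)

theorem Qpoly_le_Qpoly_of_forall₂_le {l l' : List ℝ} {y : ℝ} (hll' : List.Forall₂ (· ≤ ·) l l')
    (hl : (y :: l).IsChain (· ≥ ·)) (hl' : (y :: l').IsChain (· ≥ ·)) :
    Qpoly l' y ≤ Qpoly l y := by
  induction hll' generalizing y with
  | nil => exact le_rfl
  | @cons a b l l' hab _ ih =>
    obtain ⟨-, hl⟩ := List.isChain_cons_cons.mp hl
    obtain ⟨hby, hl'⟩ := List.isChain_cons_cons.mp hl'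
    have chain_of_ge {t : ℝ} (ht : a ≤ t) : (t :: l).IsChain (· ≥ ·) :=
      hl.imp_head fun h ↦ h.trans ht
    have nonneg : ∀ t ∈ Ioc a y, 0 ≤ Qpoly l t := fun t ht ↦ Qpoly_nonneg (chain_of_ge ht.1.le)
    calc
      ∫ t in b..y, Qpoly l' t ≤ ∫ t in b..y, Qpoly l t :=
        integral_mono_on hby ((continuous_Qpoly l').intervalIntegrable b y)
          ((continuous_Qpoly l).intervalIntegrable b y) fun t ht ↦
            ih (chain_of_ge (hab.trans ht.1)) (hl'.imp_head fun h ↦ h.trans ht.1)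
      _ ≤ ∫ t in a..y, Qpoly l t :=
        integral_mono_interval hab hby le_rfl
          (MeasureTheory.ae_restrict_of_forall_mem measurableSet_Ioc nonneg)
          ((continuous_Qpoly l).intervalIntegrable a y)

theorem Qpoly_replicate (n : ℕ) (c y : ℝ) :
    Qpoly (List.replicate n c) y = (y - c) ^ n / (n.factorial : ℝ) := by
  induction n generalizing y with
  | zero => simp [Qpoly]
  | succ n ih =>
    calc
      ∫ t in c..y, Qpoly (List.replicate n c) t = ∫ t in c..y, (t - c) ^ n / (n.factorial : ℝ) := by
        simp only [ih]
      _ = (y - c) ^ (n + 1) / ((n + 1).factorial : ℝ) := by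
        rw [integral_div, integral_comp_sub_right (· ^ n), integral_pow, Nat.factorial_succ]
        push_cast
        simp [div_div]

theorem isChain_ge_cons_replicate {α : Type*} [Preorder α] {c y : α} (hcy : c ≤ y)
    (n : ℕ) : (y :: List.replicate n c).IsChain (· ≥ ·) := by
  refine (List.pairwise_cons.mpr ⟨?_, List.pairwise_replicate_of_refl⟩).isChain
  exact fun _ hb ↦ (List.eq_of_mem_replicate hb).trans_le hcy

theorem sub_pow_div_factorial_le_Qpoly {l : List ℝ} {a y : ℝ} (hl : (a :: l).IsChain (· ≥ ·))
    (hay : a ≤ y) : (y - a) ^ l.length / (l.length.factorial : ℝ) ≤ Qpoly l y := by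
  have nodes_le : List.Forall₂ (· ≤ ·) l (List.replicate l.length a) := by
    rw [← List.map_const', List.forall₂_map_right_iff, List.forall₂_same]
    exact fun _ hb ↦ List.rel_of_pairwise_cons hl.pairwise hb
  rw [← Qpoly_replicate]
  exact Qpoly_le_Qpoly_of_forall₂_le nodes_le (hl.imp_head fun h ↦ h.trans hay)
    (isChain_ge_cons_replicate hay _)

theorem Qpoly_le_sub_pow_div_factorial {l : List ℝ} {c y : ℝ} (hl : (y :: l).IsChain (· ≥ ·))
    (hc : ∀ a ∈ y :: l, c ≤ a) : Qpoly l y ≤ (y - c) ^ l.length / (l.length.factorial : ℝ) := by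
  have le_nodes : List.Forall₂ (· ≤ ·) (List.replicate l.length c) l := by
    rw [← List.map_const', List.forall₂_map_left_iff, List.forall₂_same]
    exact fun a ha ↦ hc a (List.mem_cons_of_mem y ha)
  rw [← Qpoly_replicate]
  exact Qpoly_le_Qpoly_of_forall₂_le le_nodes
    (isChain_ge_cons_replicate (hc y List.mem_cons_self) _) hl

theorem isChain_ge_cons_map_range {α : Type*} [Preorder α] {x : ℕ → α} (hx : Antitone x)
    (n : ℕ) : (x 0 :: (List.range n).map x).IsChain (· ≥ ·) := by
  refine (List.pairwise_cons.mpr ⟨?_, ?_⟩).isChain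
  · exact List.forall_mem_map.mpr fun k _ ↦ hx k.zero_le
  · exact List.pairwise_le_range.map x fun _ _ h ↦ hx h

theorem stmt_17_general {x : ℕ → ℝ} (hx : Antitone x) (n : ℕ) {y : ℝ} (hy : x 0 ≤ y) :
    (y - x 0) ^ n / (Nat.factorial n : ℝ) ≤ Qpoly ((List.range n).map x) y ∧
      Qpoly ((List.range n).map x) y ≤ (y - x n) ^ n / (Nat.factorial n : ℝ) := by
  have chain := isChain_ge_cons_map_range hx n
  have le_nodes : ∀ a ∈ y :: (List.range n).map x, x n ≤ a := by
    simp only [List.forall_mem_cons, List.forall_mem_map, List.mem_range]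
    exact ⟨(hx n.zero_le).trans hy, fun k hk ↦ hx hk.le⟩
  have lower := sub_pow_div_factorial_le_Qpoly chain hy
  have upper := Qpoly_le_sub_pow_div_factorial (chain.imp_head fun h ↦ h.trans hy) le_nodes
  rw [List.length_map, List.length_range] at lower upper
  exact ⟨lower, upper⟩

theorem stmt_17 (x : ℕ → ℝ) (hx : StrictAnti x) :
    ∀ n : ℕ, 1 ≤ n → ∀ y : ℝ, x 0 ≤ y →
      (y - x 0) ^ n / (Nat.factorial n : ℝ) ≤ Qpoly ((List.range n).map x) y ∧
        Qpoly ((List.range n).map x) y ≤ (y - x n) ^ n / (Nat.factorial n : ℝ) :=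
  fun n _ _ hy ↦ stmt_17_general hx.antitone n hy
end

section
/- Let [a,b] ⊂ ℝ with a < b, let (n_k)_{k∈ℕ} be a strictly increasing sequence of natural numbers, and let f be an infinitely differentiable function on [a,b] for which there exist positive constants A, B with sup_{x∈[a,b]} |f^(n_k)(x)| ≤ B·A^{n_k}·(n_k)! for all k ∈ ℕ. Let (x_n)_{n∈ℕ} be a strictly decreasing sequence of points of [a,b] such that the series ∑_{j=0}^∞ |x_j − x_{j+1}| converges. If f^(n)(x_n) = 0 for all n ∈ ℕ, then f is identically zero on [a,b]. -/
open Set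

/-!
If `h c = 0` and `‖h' t‖ ≤ M (|t - c| + L) ^ N / N!`, then integrating from `c` gives
`‖h y‖ ≤ M (|y - c| + L) ^ (N + 1) / (N + 1)!`. Iterating this through zeros `z₀, z₁, …` of the
successive derivatives of `f` yields Gontcharoff's estimate
`‖f y‖ ≤ sup ‖f⁽ᴺ⁾‖ · (|y - z₀| + ∑_{i < N} |zᵢ - zᵢ₊₁|) ^ N / N!`. If `‖f⁽ᴺ⁾‖ ≤ B Aᴺ N!` for
infinitely many `N`, then letting `N → ∞` along these shows that `f` vanishes as soon as
`|y - z₀| + ∑ |zᵢ - zᵢ₊₁| < 1 / A`.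

Since the variation of `x` is finite, this applies to a high derivative `f⁽ᵐ⁾` and the tail of `x`
starting at `xₘ`, the constant `A` only doubling because `(n + m)! ≤ 2ⁿ⁺ᵐ n! m!`: all derivatives of
`f` of order at least `m` vanish at `xₘ`. The estimate with constant zeros `z` then spreads this
vanishing over the whole domain in steps whose length depends only on `A`. So `f⁽ᵐ⁾ = 0`, and
Gontcharoff's estimate with `N = m` gives `f = 0`.
-/

open Filter Topology
open scoped Nat ContDiff

theorem factorial_add_le (n m : ℕ) : (n + m)! ≤ 2 ^ (n + m) * n ! * m ! := by
  rw [← Nat.add_choose_mul_factorial_mul_factorial n m]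
  gcongr
  exact Nat.choose_le_two_pow _ _

/-- The sequence `F` satisfies a Cauchy-type bound `‖F n‖ ≤ B * A ^ n * n !` on `s` for infinitely
many `n`. For the derivatives of `f`, this says that `f` lies in the class `C_n̄`, with
constant `A`, for some sequence `n̄`. -/
def HasFactorialGrowthOn {α E : Type*} [Norm E] (F : ℕ → α → E) (s : Set α) (A : ℝ) : Prop :=
  ∃ B : ℝ, ∃ᶠ n in atTop, ∀ t ∈ s, ‖F n t‖ ≤ B * A ^ n * n !

theorem HasFactorialGrowthOn.shift {α E : Type*} [Norm E] {F : ℕ → α → E}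
    {s : Set α} {A : ℝ} (hF : HasFactorialGrowthOn F s A) (hA : 0 ≤ A) (m : ℕ) :
    HasFactorialGrowthOn (fun n ↦ F (n + m)) s (2 * A) := by
  obtain ⟨B, hB⟩ := hF
  rw [← map_add_atTop_eq_nat m, frequently_map] at hB
  refine ⟨|B| * (2 * A) ^ m * m !, hB.mono fun n hn t ht ↦ ?_⟩
  have hfact : ((n + m)! : ℝ) ≤ 2 ^ (n + m) * n ! * m ! := mod_cast factorial_add_le n m
  calc ‖F (n + m) t‖ ≤ B * A ^ (n + m) * (n + m)! := hn t ht
    _ ≤ |B| * A ^ (n + m) * (2 ^ (n + m) * n ! * m !) := by gcongr; exact le_abs_self B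
    _ = |B| * (2 * A) ^ m * m ! * (2 * A) ^ n * n ! := by ring

variable {𝕜 E : Type*} [RCLike 𝕜] [NormedAddCommGroup E] [NormedSpace 𝕜 E] {s : Set 𝕜}

/-- Each `F (n + 1)` is the derivative of `F n` within `s`. Unlike the iterated derivatives of a
fixed function, such sequences can be re-indexed to start at any order. -/
def IsDerivSequenceOn (F : ℕ → 𝕜 → E) (s : Set 𝕜) : Prop :=
  ∀ n, ∀ t ∈ s, HasDerivWithinAt (F n) (F (n + 1) t) s t

theorem isDerivSequenceOn_iteratedDerivWithin {f : 𝕜 → E} (hf : ContDiffOn 𝕜 ∞ f s)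
    (hs : UniqueDiffOn 𝕜 s) : IsDerivSequenceOn (fun n ↦ iteratedDerivWithin n f s) s := by
  intro n t ht
  have hdiff : DifferentiableOn 𝕜 (iteratedDerivWithin n f s) s :=
    hf.differentiableOn_iteratedDerivWithin (by exact_mod_cast ENat.natCast_lt_top n) hs
  simpa only [iteratedDerivWithin_succ] using (hdiff t ht).hasDerivWithinAt

theorem norm_le_of_norm_deriv_le_comp_dist (hs : Convex ℝ s) {h h' : 𝕜 → E} {ψ ψ' : ℝ → ℝ}
    (hh : ∀ t ∈ s, HasDerivWithinAt h (h' t) s t) (hψ : ∀ r, HasDerivAt ψ (ψ' r) r)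
    {c y : 𝕜} (hc : c ∈ s) (hy : y ∈ s) (h0 : ‖h c‖ ≤ ψ 0)
    (hbound : ∀ t ∈ s, ‖h' t‖ ≤ ψ' (dist t c)) : ‖h y‖ ≤ ψ (dist y c) := by
  let : NormedSpace ℝ E := NormedSpace.restrictScalars ℝ 𝕜 E
  have : IsScalarTower ℝ 𝕜 E := Real.isScalarTower
  let γ : ℝ → 𝕜 := AffineMap.lineMap c y
  have hγ : MapsTo γ (Icc 0 1) s := fun r hr ↦ hs.lineMap_mem hc hy hr
  have hderiv : ∀ r ∈ Icc (0 : ℝ) 1,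
      HasDerivWithinAt (h ∘ γ) ((y - c) • h' (γ r)) (Icc 0 1) r := fun r hr ↦
    (hh _ (hγ hr)).scomp r AffineMap.hasDerivWithinAt_lineMap hγ
  have hψγ : ∀ r, HasDerivAt (fun r ↦ ψ (r * dist y c)) (ψ' (r * dist y c) * dist y c) r :=
    fun r ↦ (hψ _).comp r (hasDerivAt_mul_const _)
  have hboundγ : ∀ r ∈ Ico (0 : ℝ) 1,
      ‖(y - c) • h' (γ r)‖ ≤ ψ' (r * dist y c) * dist y c := by
    intro r hr
    have hdist : dist (γ r) c = r * dist y c := by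
      rw [dist_lineMap_left, Real.norm_of_nonneg hr.1, dist_comm]
    rw [norm_smul, ← dist_eq_norm, mul_comm, ← hdist]
    gcongr
    exact hbound _ (hγ (Ico_subset_Icc_self hr))
  have key := image_norm_le_of_norm_deriv_right_le_deriv_boundary
    (fun r hr ↦ (hderiv r hr).continuousWithinAt)
    (fun r hr ↦ (hderiv r (Ico_subset_Icc_self hr)).mono_of_mem_nhdsWithin
      (Icc_mem_nhdsGE_of_mem hr))
    (by simpa [γ] using h0) hψγ hboundγ (right_mem_Icc.2 zero_le_one)
  simpa [γ] using key

theorem hasDerivAt_add_pow_div_factorial (L : 𝕜) (N : ℕ) (r : 𝕜) :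
    HasDerivAt (fun r ↦ (r + L) ^ (N + 1) / (N + 1)!) ((r + L) ^ N / N !) r := by
  refine ((((hasDerivAt_id r).add_const L).pow (N + 1)).div_const _).congr_deriv ?_
  have : (N ! : 𝕜) ≠ 0 := Nat.cast_ne_zero.2 N.factorial_ne_zero
  have : (N + 1 : 𝕜) ≠ 0 := N.cast_add_one_ne_zero
  rw [Nat.factorial_succ]
  push_cast
  simp only [id_eq, mul_one]
  field_simp

namespace IsDerivSequenceOn

variable {F : ℕ → 𝕜 → E} {A : ℝ}

theorem shift (hF : IsDerivSequenceOn F s) (m : ℕ) :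
    IsDerivSequenceOn (fun n ↦ F (n + m)) s := fun n ↦ by
  simpa only [Nat.add_right_comm] using hF (n + m)

theorem norm_le_mul_pow_div_factorial (hF : IsDerivSequenceOn F s) (hs : Convex ℝ s) {z : ℕ → 𝕜}
    (hz : ∀ n, z n ∈ s) {N : ℕ} (hzero : ∀ n < N, F n (z n) = 0) {M : ℝ}
    (hM : ∀ t ∈ s, ‖F N t‖ ≤ M) {y : 𝕜} (hy : y ∈ s) :
    ‖F 0 y‖ ≤ M * ((dist y (z 0) + ∑ i ∈ Finset.range N, dist (z i) (z (i + 1))) ^ N / N !) := by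
  have hM0 : 0 ≤ M := (norm_nonneg _).trans (hM y hy)
  induction N generalizing F z y with
  | zero => simpa using hM y hy
  | succ N ih =>
    set L := ∑ i ∈ Finset.range (N + 1), dist (z i) (z (i + 1)) with hL
    have hderiv : ∀ t ∈ s, ‖F 1 t‖ ≤ M * ((dist t (z 0) + L) ^ N / N !) := by
      intro t ht
      have hstep := ih (hF.shift 1) (fun n ↦ hz (n + 1))
        (fun n hn ↦ hzero (n + 1) (by omega)) hM ht
      refine hstep.trans ?_
      gcongr M * (?_ ^ N / _)
      rw [hL, Finset.sum_range_succ']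
      linarith [dist_triangle t (z 0) (z 1)]
    refine norm_le_of_norm_deriv_le_comp_dist hs (hF 0)
      (fun r ↦ (hasDerivAt_add_pow_div_factorial L N r).const_mul M) (hz 0) hy ?_ hderiv
    rw [hzero 0 N.succ_pos, norm_zero]
    positivity

theorem apply_zero_eq_zero_of_dist_add_sum_dist_le (hF : IsDerivSequenceOn F s)
    (hs : Convex ℝ s) (hgrowth : HasFactorialGrowthOn F s A) (hA : 0 ≤ A) {z : ℕ → 𝕜}
    (hz : ∀ n, z n ∈ s) (hzero : ∀ n, F n (z n) = 0) {y : 𝕜} (hy : y ∈ s) {δ : ℝ}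
    (hδ : ∀ N, dist y (z 0) + ∑ i ∈ Finset.range N, dist (z i) (z (i + 1)) ≤ δ)
    (hAδ : A * δ < 1) : F 0 y = 0 := by
  obtain ⟨B, hB⟩ := hgrowth
  have hδ0 : 0 ≤ δ := dist_nonneg.trans (by simpa using hδ 0)
  have hlim : Tendsto (fun n : ℕ ↦ B * (A * δ) ^ n) atTop (𝓝 0) := by
    simpa using (tendsto_pow_atTop_nhds_zero_of_lt_one (by positivity) hAδ).const_mul B
  refine norm_le_zero_iff.1 (ge_of_tendsto_of_frequently hlim (hB.mono fun n hn ↦ ?_))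
  have hM0 : 0 ≤ B * A ^ n * n ! := (norm_nonneg _).trans (hn y hy)
  calc ‖F 0 y‖
      ≤ B * A ^ n * n ! *
          ((dist y (z 0) + ∑ i ∈ Finset.range n, dist (z i) (z (i + 1))) ^ n / n !) :=
        hF.norm_le_mul_pow_div_factorial hs hz (fun n _ ↦ hzero n) hn hy
    _ ≤ B * A ^ n * n ! * (δ ^ n / n !) := by gcongr; exact hδ n
    _ = B * (A * δ) ^ n := by rw [mul_pow]; field_simp

theorem eq_zero_of_dist_add_sum_dist_le (hF : IsDerivSequenceOn F s)
    (hs : Convex ℝ s) (hgrowth : HasFactorialGrowthOn F s A) (hA : 0 ≤ A) {z : ℕ → 𝕜}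
    (hz : ∀ n, z n ∈ s) (hzero : ∀ n, F n (z n) = 0) {y : 𝕜} (hy : y ∈ s) {δ : ℝ}
    (hδ : ∀ N, dist y (z 0) + ∑ i ∈ Finset.range N, dist (z i) (z (i + 1)) ≤ δ)
    (hAδ : 2 * A * δ < 1) (m : ℕ) : F m y = 0 := by
  have hδm (N : ℕ) :
      dist y (z m) + ∑ i ∈ Finset.range N, dist (z (i + m)) (z (i + m + 1)) ≤ δ := by
    have hsplit := Finset.sum_range_add (fun i ↦ dist (z i) (z (i + 1))) m N
    simp only [add_comm m] at hsplit
    linarith [hδ (N + m), dist_triangle y (z 0) (z m), dist_le_range_sum_dist z m]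
  simpa using (hF.shift m).apply_zero_eq_zero_of_dist_add_sum_dist_le hs (hgrowth.shift hA m)
    (by positivity) (fun n ↦ hz (n + m)) (fun n ↦ hzero (n + m)) hy
    (by simpa [Nat.add_right_comm] using hδm) hAδ

theorem eq_zero_of_forall_apply_eq_zero (hF : IsDerivSequenceOn F s) (hs : Convex ℝ s)
    (hgrowth : HasFactorialGrowthOn F s A) (hA : 0 < A) {c : 𝕜} (hc : c ∈ s)
    (hzero : ∀ n, F n c = 0) {y : 𝕜} (hy : y ∈ s) (n : ℕ) : F n y = 0 := by
  let P (u v : 𝕜) : Prop := (∀ n, F n u = 0) → ∀ n, F n v = 0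
  have hlocal : ∀ u ∈ s, ∀ v ∈ s, dist v u < 1 / (2 * A) → P u v := by
    intro u hu v hv huv hzero
    refine hF.eq_zero_of_dist_add_sum_dist_le hs hgrowth hA.le (fun _ ↦ hu) hzero hv
      (δ := dist v u) (fun N ↦ by simp) ?_
    rwa [lt_div_iff₀' (by positivity)] at huv
  have hP : P c y := by
    refine hs.isPreconnected.induction₂' P (fun u hu ↦ ?_) (fun _ _ _ _ _ _ huv hvw h ↦ hvw (huv h))
      hc hy
    filter_upwards [self_mem_nhdsWithin,
      mem_nhdsWithin_of_mem_nhds (Metric.ball_mem_nhds u (ε := 1 / (2 * A)) (by positivity))]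
      with v hv hvu
    exact ⟨hlocal u hu v hv hvu, hlocal v hv u hu (Metric.mem_ball'.1 hvu)⟩
  exact hP hzero n

theorem exists_forall_add_eq_zero (hF : IsDerivSequenceOn F s) (hs : Convex ℝ s)
    (hgrowth : HasFactorialGrowthOn F s A) (hA : 0 ≤ A) {x : ℕ → 𝕜} (hx : ∀ n, x n ∈ s)
    (hsum : Summable fun n ↦ dist (x n) (x (n + 1))) (hzero : ∀ n, F n (x n) = 0) :
    ∃ m, ∀ n, F (n + m) (x m) = 0 := by
  have htail : Tendsto (fun m ↦ 2 * (2 * A) * ∑' i, dist (x (i + m)) (x (i + m + 1)))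
      atTop (𝓝 0) := by
    simpa using (tendsto_sum_nat_add fun i ↦ dist (x i) (x (i + 1))).const_mul (2 * (2 * A))
  obtain ⟨m, hm⟩ := (htail.eventually_lt_const one_pos).exists
  refine ⟨m, (hF.shift m).eq_zero_of_dist_add_sum_dist_le hs (hgrowth.shift hA m) (by positivity)
    (fun n ↦ hx (n + m)) (fun n ↦ hzero (n + m)) (hx m) (fun N ↦ ?_) hm⟩
  have hpartial := ((summable_nat_add_iff m).2 hsum).sum_le_tsum (Finset.range N)
    fun _ _ ↦ dist_nonneg
  simpa [Nat.add_right_comm] using hpartial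

theorem eqOn_zero (hF : IsDerivSequenceOn F s) (hs : Convex ℝ s)
    (hgrowth : HasFactorialGrowthOn F s A) (hA : 0 < A) {x : ℕ → 𝕜} (hx : ∀ n, x n ∈ s)
    (hsum : Summable fun n ↦ dist (x n) (x (n + 1))) (hzero : ∀ n, F n (x n) = 0) :
    EqOn (F 0) 0 s := by
  obtain ⟨m, hm⟩ := hF.exists_forall_add_eq_zero hs hgrowth hA.le hx hsum hzero
  have hFm : ∀ t ∈ s, F m t = 0 := fun t ht ↦ by
    simpa using (hF.shift m).eq_zero_of_forall_apply_eq_zero hs (hgrowth.shift hA.le m)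
      (by positivity) (hx m) hm ht 0
  intro y hy
  have hle := hF.norm_le_mul_pow_div_factorial hs hx (fun n _ ↦ hzero n)
    (fun t ht ↦ (norm_eq_zero.2 (hFm t ht)).le) hy
  simpa using hle

end IsDerivSequenceOn

theorem stmt_19_general (hs : Convex ℝ s) (hs' : UniqueDiffOn 𝕜 s) {f : 𝕜 → E}
    (hf : ContDiffOn 𝕜 ∞ f s) {A : ℝ} (hA : 0 < A)
    (hgrowth : HasFactorialGrowthOn (fun n ↦ iteratedDerivWithin n f s) s A)
    {x : ℕ → 𝕜} (hx : ∀ n, x n ∈ s) (hsum : Summable fun n ↦ dist (x n) (x (n + 1)))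
    (hzero : ∀ n, iteratedDerivWithin n f s (x n) = 0) : EqOn f 0 s := by
  simpa only [iteratedDerivWithin_zero] using
    (isDerivSequenceOn_iteratedDerivWithin hf hs').eqOn_zero hs hgrowth hA hx hsum hzero

theorem stmt_19 (a b : ℝ) (hab : a < b) (nseq : ℕ → ℕ) (hn : StrictMono nseq)
    (f : ℝ → ℝ) (hf : ContDiffOn ℝ (⊤ : ℕ∞) f (Icc a b))
    (A B : ℝ) (hA : 0 < A) (hB : 0 < B)
    (hbound : ∀ k : ℕ, ∀ x ∈ Icc a b,
      |iteratedDerivWithin (nseq k) f (Icc a b) x| ≤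
        B * A ^ (nseq k) * (Nat.factorial (nseq k) : ℝ))
    (x : ℕ → ℝ) (hmem : ∀ n, x n ∈ Icc a b) (hx : StrictAnti x)
    (hconv : Summable (fun j : ℕ => |x j - x (j + 1)|))
    (hzero : ∀ n : ℕ, iteratedDerivWithin n f (Icc a b) (x n) = 0) :
    ∀ y ∈ Icc a b, f y = 0 :=
  have hgrowth : HasFactorialGrowthOn (fun n ↦ iteratedDerivWithin n f (Icc a b)) (Icc a b) A :=
    ⟨B, hn.tendsto_atTop.frequently (Frequently.of_forall hbound)⟩
  stmt_19_general (convex_Icc a b) (uniqueDiffOn_Icc hab) hf hA hgrowth hmem hconv hzero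
end
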